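/- arXiv:1902.08720 — 9 statements merged into one kernel-verified Lean document; each statement's English description precedes it below -/
import Mathlib

section
/- Let m, n be natural numbers and let α : {0,…,m+n} → {0,…,m} and α' : {0,…,m+n} → {0,…,n} be order-preserving maps. Then the pair ⟨α,α'⟩ is an (m,n)-shuffle (i.e. α and α' are surjective and α(i) + α'(i) = i for all i) if and only if the map i ↦ (α(i), α'(i)) into the product poset {0,…,m} × {0,…,n} is strictly monotone, sends 0 to (0,0), and sends m+n to (m,n). (This expresses that (m,n)-shuffles are exactly the non-degenerate (m+n)-simplices of Δ[m] × Δ[n].) -/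
/-- Extend a map `Fin (N+1) → Fin (M+1)` to a `ℕ`-valued map on all of `ℕ`,
clamping the input to the range `{0, …, N}`. -/
def extendFin {N M : ℕ} (f : Fin (N + 1) → Fin (M + 1)) (i : ℕ) : ℕ :=
  (f ⟨min i N, Nat.lt_succ_of_le (min_le_right i N)⟩ : ℕ)

/-- `⟨α, α'⟩` is an `(m,n)`-shuffle: both maps are monotone surjections and
`α i + α' i = i` for all `i`. -/
def IsShuffle (m n : ℕ) (α : Fin (m + n + 1) → Fin (m + 1))
    (α' : Fin (m + n + 1) → Fin (n + 1)) : Prop :=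
  Monotone α ∧ Monotone α' ∧ Function.Surjective α ∧ Function.Surjective α' ∧
    ∀ i : Fin (m + n + 1), (α i : ℕ) + (α' i : ℕ) = (i : ℕ)

/-- The pointwise order on `(m,n)`-shuffles (a shuffle is determined by its
first component). -/
def ShuffleLE (m n : ℕ) (α β : Fin (m + n + 1) → Fin (m + 1)) : Prop :=
  ∀ i, α i ≤ β i

/-- The strict pointwise order on `(m,n)`-shuffles. -/
def ShuffleLT (m n : ℕ) (α β : Fin (m + n + 1) → Fin (m + 1)) : Prop :=
  ShuffleLE m n α β ∧ α ≠ β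

/-- The lower-right corner set `⌞⟨α,α'⟩`: all `i` with `1 ≤ i ≤ m+n-1` such that
`α(i+1) = α(i) = α(i-1)+1`. -/
def lrCorner (m n : ℕ) (α : Fin (m + n + 1) → Fin (m + 1)) : Set ℕ :=
  {i | 1 ≤ i ∧ i + 1 ≤ m + n ∧
    extendFin α (i + 1) = extendFin α i ∧ extendFin α i = extendFin α (i - 1) + 1}

/-- The upper-left corner set `⌜⟨α,α'⟩`: all `i` with `1 ≤ i ≤ m+n-1` such that
`α(i+1) = α(i)+1 = α(i-1)+1`. -/
def ulCorner (m n : ℕ) (α : Fin (m + n + 1) → Fin (m + 1)) : Set ℕ :=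
  {i | 1 ≤ i ∧ i + 1 ≤ m + n ∧
    extendFin α (i + 1) = extendFin α i + 1 ∧ extendFin α i = extendFin α (i - 1)}

/-- `⟨β,β'⟩` is an immediate predecessor of `⟨α,α'⟩`: it is a shuffle, `β < α`,
and no shuffle lies strictly between them. -/
def IsImmPred (m n : ℕ)
    (β : Fin (m + n + 1) → Fin (m + 1)) (β' : Fin (m + n + 1) → Fin (n + 1))
    (α : Fin (m + n + 1) → Fin (m + 1)) (α' : Fin (m + n + 1) → Fin (n + 1)) : Prop :=
  IsShuffle m n β β' ∧ ShuffleLT m n β α ∧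
    ∀ (γ : Fin (m + n + 1) → Fin (m + 1)) (γ' : Fin (m + n + 1) → Fin (n + 1)),
      IsShuffle m n γ γ' → ¬ (ShuffleLT m n β γ ∧ ShuffleLT m n γ α)

/-- `⟨γ,γ'⟩` is an immediate successor of `⟨α,α'⟩`: it is a shuffle, `α < γ`,
and no shuffle lies strictly between them. -/
def IsImmSucc (m n : ℕ)
    (γ : Fin (m + n + 1) → Fin (m + 1)) (γ' : Fin (m + n + 1) → Fin (n + 1))
    (α : Fin (m + n + 1) → Fin (m + 1)) (α' : Fin (m + n + 1) → Fin (n + 1)) : Prop :=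
  IsShuffle m n γ γ' ∧ ShuffleLT m n α γ ∧
    ∀ (δ : Fin (m + n + 1) → Fin (m + 1)) (δ' : Fin (m + n + 1) → Fin (n + 1)),
      IsShuffle m n δ δ' → ¬ (ShuffleLT m n α δ ∧ ShuffleLT m n δ γ)

/-- A pair of monotone maps `α : [m+n] → [m]`, `α' : [m+n] → [n]` is an
`(m,n)`-shuffle iff `i ↦ (α i, α' i)` is a strictly monotone map into the product
poset sending `0` to `(0,0)` and `m+n` to `(m,n)`. -/
theorem shuffle_iff_strictMono (m n : ℕ)
    (α : Fin (m + n + 1) → Fin (m + 1)) (α' : Fin (m + n + 1) → Fin (n + 1))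
    (hα : Monotone α) (hα' : Monotone α') :
    (Function.Surjective α ∧ Function.Surjective α' ∧
        ∀ i : Fin (m + n + 1), (α i : ℕ) + (α' i : ℕ) = (i : ℕ)) ↔
      (StrictMono (fun i : Fin (m + n + 1) => (α i, α' i)) ∧
        α 0 = 0 ∧ α' 0 = 0 ∧
        α (Fin.last (m + n)) = Fin.last m ∧ α' (Fin.last (m + n)) = Fin.last n) := by
  have surj : ∀ (N M : ℕ) (f : Fin (N + 1) → Fin (M + 1)), f 0 = 0 →
      f (Fin.last N) = Fin.last M →
      (∀ (j : ℕ) (h : j + 1 < N + 1),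
        (f ⟨j + 1, h⟩ : ℕ) ≤ (f ⟨j, by omega⟩ : ℕ) + 1) →
      Function.Surjective f := by
    intro N M f h0 h1 hs
    have key : ∀ (j : ℕ) (h : j < N + 1) (k : ℕ), k ≤ (f ⟨j, h⟩ : ℕ) →
        ∃ i, (f i : ℕ) = k := by
      intro j
      induction j with
      | zero =>
        intro h k hk
        have h2 : f ⟨0, h⟩ = 0 := h0
        rw [h2] at hk
        refine ⟨0, ?_⟩
        rw [h0]
        simp at hk ⊢
        omega
      | succ j ih =>
        intro h k hk
        have h3 := hs j h
        by_cases hk' : k ≤ (f ⟨j, by omega⟩ : ℕ)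
        · exact ih _ k hk'
        · exact ⟨⟨j + 1, h⟩, by omega⟩
    intro k
    have h2 : f ⟨N, by omega⟩ = Fin.last M := h1
    obtain ⟨i, hi⟩ := key N (by omega) k (by rw [h2]; simp; omega)
    exact ⟨i, Fin.ext hi⟩
  constructor
  · rintro ⟨-, -, h⟩
    have a0 := h 0
    have a1 := h (Fin.last _)
    have b := (α (Fin.last _)).isLt
    have b' := (α' (Fin.last _)).isLt
    simp only [Fin.val_zero, Fin.val_last] at a0 a1
    refine ⟨?_, ?_, ?_, ?_, ?_⟩
    · apply Monotone.strictMono_of_injective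
      · intro i j hij
        exact ⟨hα hij, hα' hij⟩
      · intro i j hij
        simp only [Prod.mk.injEq] at hij
        apply Fin.ext
        rw [← h i, ← h j, hij.1, hij.2]
    all_goals
      apply Fin.ext
      simp only [Fin.val_zero, Fin.val_last]
      omega
  · rintro ⟨hs, h0, h0', h1, h1'⟩
    have step : ∀ i j : Fin (m + n + 1), i < j →
        (α i : ℕ) + (α' i : ℕ) < (α j : ℕ) + (α' j : ℕ) := by
      intro i j hij
      have e1 : (α i : ℕ) ≤ α j := hα hij.le
      have e2 : (α' i : ℕ) ≤ α' j := hα' hij.le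
      by_contra hc
      apply (hs hij).ne
      exact Prod.ext (Fin.ext (by simp only; omega)) (Fin.ext (by simp only; omega))
    have lo : ∀ (j : ℕ) (h : j < m + n + 1),
        j ≤ (α ⟨j, h⟩ : ℕ) + (α' ⟨j, h⟩ : ℕ) := by
      intro j
      induction j with
      | zero => intro h; omega
      | succ j ih =>
        intro h
        have e1 := ih (by omega)
        have e2 := step ⟨j, by omega⟩ ⟨j + 1, h⟩ (by simp [Fin.lt_def])
        omega
    have hi : ∀ (d j : ℕ) (h : j < m + n + 1), j + d = m + n →
        (α ⟨j, h⟩ : ℕ) + (α' ⟨j, h⟩ : ℕ) ≤ j := by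
      intro d
      induction d with
      | zero =>
        intro j h hd
        have := (α ⟨j, h⟩).isLt
        have := (α' ⟨j, h⟩).isLt
        omega
      | succ d ih =>
        intro j h hd
        have e1 := ih (j + 1) (by omega) (by omega)
        have e2 := step ⟨j, by omega⟩ ⟨j + 1, by omega⟩ (by simp [Fin.lt_def])
        omega
    have eq : ∀ (j : ℕ) (h : j < m + n + 1),
        (α ⟨j, h⟩ : ℕ) + (α' ⟨j, h⟩ : ℕ) = j := fun j h =>
      le_antisymm (hi (m + n - j) j h (by omega)) (lo j h)
    have mono : ∀ (j : ℕ) (h : j + 1 < m + n + 1),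
        (α ⟨j, by omega⟩ : ℕ) ≤ α ⟨j + 1, h⟩ ∧ (α' ⟨j, by omega⟩ : ℕ) ≤ α' ⟨j + 1, h⟩ := by
      intro j h
      exact ⟨hα (by simp [Fin.le_def]), hα' (by simp [Fin.le_def])⟩
    refine ⟨surj _ _ α h0 h1 ?_, surj _ _ α' h0' h1' ?_, fun i => eq i i.isLt⟩
    all_goals
      intro j h
      have e1 := eq j (by omega)
      have e2 := eq (j + 1) h
      have e3 := mono j h
      omega
end

section
/- Let ⟨α,α'⟩ and ⟨β,β'⟩ be (m,n)-shuffles. If α(i) = β(i) (equivalently α'(i) = β'(i)) for every i in the lower-right corner set ⌞⟨α,α'⟩, then ⟨α,α'⟩ ≤ ⟨β,β'⟩, i.e. α(i) ≤ β(i) for all i ∈ {0,…,m+n}. -/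
theorem nat_path_le (N : ℕ) (a b : ℕ → ℕ) (h0 : a 0 = 0) (hN : a N = b N)
    (ha : ∀ i < N, a (i+1) = a i ∨ a (i+1) = a i + 1)
    (hb : ∀ i < N, b (i+1) = b i ∨ b (i+1) = b i + 1)
    (h : ∀ i, 1 ≤ i → i + 1 ≤ N → a (i+1) = a i → a i = a (i-1) + 1 → a i = b i) :
    ∀ i ≤ N, a i ≤ b i := by
  have key : ∀ k i, i + 1 + k = N → a (i+1) = a i + 1 → a (i+1) ≤ b (i+1) := by
    intro k
    induction k with
    | zero =>
      intro i hi _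
      have : i + 1 = N := by omega
      rw [this]; omega
    | succ k ih =>
      intro i hi hu
      rcases ha (i+1) (by omega) with h1 | h1
      · exact (h (i+1) (by omega) (by omega) h1 (by simpa using hu)).le
      · have := ih (i+1) (by omega) h1
        have := hb (i+1) (by omega)
        omega
  intro i
  induction i with
  | zero => intro _; omega
  | succ i ih =>
    intro hi
    have h1 := ih (by omega)
    have h2 := hb i (by omega)
    rcases ha i (by omega) with h3 | h3
    · omega
    · exact key (N - (i+1)) i (by omega) h3

theorem extendFin_facts {m n : ℕ} {α : Fin (m + n + 1) → Fin (m + 1)}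
    {α' : Fin (m + n + 1) → Fin (n + 1)} (hα : IsShuffle m n α α') :
    extendFin α 0 = 0 ∧ extendFin α (m+n) = m ∧
    ∀ i < m + n, extendFin α (i+1) = extendFin α i ∨ extendFin α (i+1) = extendFin α i + 1 := by
  obtain ⟨h1, h2, -, -, h5⟩ := hα
  unfold extendFin
  refine ⟨?_, ?_, ?_⟩
  · have := h5 ⟨min 0 (m+n), by omega⟩
    simp only at this
    omega
  · have := h5 ⟨min (m+n) (m+n), by omega⟩
    simp only at this
    omega
  · intro i hi
    have e1 := h5 ⟨min i (m+n), by omega⟩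
    have e2 := h5 ⟨min (i+1) (m+n), by omega⟩
    have hle : (⟨min i (m+n), by omega⟩ : Fin (m+n+1)) ≤ ⟨min (i+1) (m+n), by omega⟩ := by
      rw [Fin.mk_le_mk]; omega
    have g1 := Fin.le_def.mp (h1 hle)
    have g2 := Fin.le_def.mp (h2 hle)
    simp only at e1 e2
    omega

/-- If two `(m,n)`-shuffles agree on the lower-right corner set of the first one,
then the first is below the second. -/
theorem shuffle_le_of_eq_on_lrCorner (m n : ℕ)
    (α : Fin (m + n + 1) → Fin (m + 1)) (α' : Fin (m + n + 1) → Fin (n + 1))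
    (β : Fin (m + n + 1) → Fin (m + 1)) (β' : Fin (m + n + 1) → Fin (n + 1))
    (hα : IsShuffle m n α α') (hβ : IsShuffle m n β β')
    (h : ∀ i ∈ lrCorner m n α, extendFin α i = extendFin β i) :
    ShuffleLE m n α β := by
  obtain ⟨a0, aN, ha⟩ := extendFin_facts hα
  obtain ⟨b0, bN, hb⟩ := extendFin_facts hβ
  have key := nat_path_le (m+n) (extendFin α) (extendFin β) a0 (aN.trans bN.symm) ha hb
    (fun i h1 h2 h3 h4 => h i ⟨h1, h2, h3, h4⟩)
  intro i
  have hi : (i : ℕ) ≤ m + n := by omega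
  have := key i hi
  simpa [extendFin, min_eq_left hi] using this
end

section
/- Let ⟨α,α'⟩ be an (m,n)-shuffle and let i ∈ ⌞⟨α,α'⟩. Then there exists a unique (m,n)-shuffle ⟨β,β'⟩ such that ⟨β,β'⟩ is an immediate predecessor of ⟨α,α'⟩ and β(j) = α(j) for all j ≠ i. Moreover this ⟨β,β'⟩ satisfies β(i) = α(i) − 1. -/
/-- For `i` in the lower-right corner set of a shuffle `⟨α,α'⟩`, there is a unique
shuffle `⟨β,β'⟩` which is an immediate predecessor of `⟨α,α'⟩` and agrees with it
away from `i`; moreover it satisfies `β i = α i - 1`. -/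
theorem exists_unique_immPred_of_mem_lrCorner (m n : ℕ)
    (α : Fin (m + n + 1) → Fin (m + 1)) (α' : Fin (m + n + 1) → Fin (n + 1))
    (hα : IsShuffle m n α α') (i : ℕ) (hi : i ∈ lrCorner m n α) :
    (∃! p : (Fin (m + n + 1) → Fin (m + 1)) × (Fin (m + n + 1) → Fin (n + 1)),
      IsImmPred m n p.1 p.2 α α' ∧
        ∀ j : Fin (m + n + 1), (j : ℕ) ≠ i → p.1 j = α j) ∧
    (∀ p : (Fin (m + n + 1) → Fin (m + 1)) × (Fin (m + n + 1) → Fin (n + 1)),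
      IsImmPred m n p.1 p.2 α α' →
        (∀ j : Fin (m + n + 1), (j : ℕ) ≠ i → p.1 j = α j) →
        extendFin p.1 i = extendFin α i - 1) := by
  obtain ⟨hm, hm', hs, hs', hsum⟩ := hα
  obtain ⟨h1, h2, h3, h4⟩ := hi
  obtain ⟨I, hI⟩ : ∃ I : Fin (m + n + 1), (I : ℕ) = i := ⟨⟨i, by omega⟩, rfl⟩
  obtain ⟨P, hP⟩ : ∃ I : Fin (m + n + 1), (I : ℕ) = i + 1 := ⟨⟨i + 1, by omega⟩, rfl⟩
  obtain ⟨M, hM⟩ : ∃ I : Fin (m + n + 1), (I : ℕ) = i - 1 := ⟨⟨i - 1, by omega⟩, rfl⟩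
  have ext : ∀ (f : Fin (m + n + 1) → Fin (m + 1)) (k : ℕ) (K : Fin (m + n + 1)),
      (K : ℕ) = k → extendFin f k = (f K : ℕ) := by
    intro f k K hK
    unfold extendFin
    congr 2
    apply Fin.ext
    have := K.2
    simp only
    omega
  rw [ext α _ P hP, ext α _ I hI] at h3
  rw [ext α _ I hI, ext α _ M hM] at h4
  have sP := hsum P
  have sI := hsum I
  have sM := hsum M
  have key : ∀ (β : Fin (m + n + 1) → Fin (m + 1)) (β' : Fin (m + n + 1) → Fin (n + 1)),
      IsShuffle m n β β' → ShuffleLT m n β α →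
      (∀ j : Fin (m + n + 1), (j : ℕ) ≠ i → β j = α j) → β I = α M := by
    intro β β' hβ hlt hj
    have a1 : β M ≤ β I := hβ.1 (by rw [Fin.le_def]; omega)
    rw [hj M (by omega)] at a1
    have a2 := hlt.1 I
    have a3 : β I ≠ α I := by
      intro h
      apply hlt.2
      funext j
      by_cases hji : (j : ℕ) = i
      · have : j = I := Fin.ext (by omega)
        rw [this, h]
      · exact hj j hji
    have a4 : (β I : ℕ) ≠ α I := fun h => a3 (Fin.ext h)
    rw [Fin.le_def] at a1 a2
    apply Fin.ext
    omega
  have neI : ∀ j : Fin (m + n + 1), j ≠ I → (j : ℕ) ≠ i :=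
    fun j h h' => h (Fin.ext (by omega))
  have hMI : M ≠ I := fun h => by rw [h] at hM; omega
  have hPI : P ≠ I := fun h => by rw [h] at hP; omega
  have hsh : IsShuffle m n (Function.update α I (α M)) (Function.update α' I (α' P)) := by
    refine ⟨?_, ?_, ?_, ?_, ?_⟩
    · intro a b hab
      by_cases ha : a = I <;> by_cases hb : b = I
      · subst ha; subst hb; simp
      · subst ha
        simp only [Function.update_self, Function.update_of_ne hb]
        exact hm (by rw [Fin.le_def] at *; omega)
      · subst hb
        simp only [Function.update_self, Function.update_of_ne ha]
        have := neI a ha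
        exact hm (by rw [Fin.le_def] at *; omega)
      · simp only [Function.update_of_ne ha, Function.update_of_ne hb]
        exact hm hab
    · intro a b hab
      by_cases ha : a = I <;> by_cases hb : b = I
      · subst ha; subst hb; simp
      · subst ha
        simp only [Function.update_self, Function.update_of_ne hb]
        have := neI b hb
        exact hm' (by rw [Fin.le_def] at *; omega)
      · subst hb
        simp only [Function.update_self, Function.update_of_ne ha]
        exact hm' (by rw [Fin.le_def] at *; omega)
      · simp only [Function.update_of_ne ha, Function.update_of_ne hb]
        exact hm' hab
    · intro y
      obtain ⟨x, rfl⟩ := hs y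
      by_cases hx : x = I
      · exact ⟨P, by rw [Function.update_of_ne hPI, hx]; exact Fin.ext h3⟩
      · exact ⟨x, Function.update_of_ne hx _ _⟩
    · intro y
      obtain ⟨x, rfl⟩ := hs' y
      by_cases hx : x = I
      · exact ⟨M, by rw [Function.update_of_ne hMI, hx]; exact Fin.ext (by omega)⟩
      · exact ⟨x, Function.update_of_ne hx _ _⟩
    · intro j
      by_cases hx : j = I
      · subst hx
        simp only [Function.update_self]
        omega
      · simp only [Function.update_of_ne hx]
        exact hsum j
  have uniq : ∀ (β : Fin (m + n + 1) → Fin (m + 1)) (β' : Fin (m + n + 1) → Fin (n + 1)),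
      IsShuffle m n β β' → ShuffleLT m n β α →
      (∀ j : Fin (m + n + 1), (j : ℕ) ≠ i → β j = α j) →
      β = Function.update α I (α M) := by
    intro β β' hβ hlt hj
    funext j
    by_cases hx : j = I
    · subst hx
      rw [Function.update_self]
      exact key β β' hβ hlt hj
    · rw [Function.update_of_ne hx]
      exact hj j (neI j hx)
  refine ⟨⟨(Function.update α I (α M), Function.update α' I (α' P)), ⟨⟨hsh, ⟨?_, ?_⟩, ?_⟩, ?_⟩, ?_⟩, ?_⟩
  · intro j
    by_cases hx : j = I
    · subst hx
      simp only [Function.update_self]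
      rw [Fin.le_def]; omega
    · simp only [Function.update_of_ne hx]
      exact le_refl _
  · intro h
    have := congrArg Fin.val (congrFun h I)
    simp only [Function.update_self] at this
    omega
  · rintro γ γ' hγ ⟨hl, hu⟩
    apply hl.2
    refine (uniq γ γ' hγ hu ?_).symm
    intro j hj
    have hx : j ≠ I := fun h => hj (by rw [h, hI])
    have := hl.1 j
    simp only [Function.update_of_ne hx] at this
    exact le_antisymm (hu.1 j) this
  · intro j hj
    have hx : j ≠ I := fun h => hj (by rw [h, hI])
    simp only [Function.update_of_ne hx]
  · rintro ⟨β, β'⟩ ⟨⟨hβ, hlt, -⟩, hj⟩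
    have e := uniq β β' hβ hlt hj
    simp only at hβ
    subst e
    congr 1
    funext j
    have b1 := hβ.2.2.2.2 j
    have b2 := hsh.2.2.2.2 j
    apply Fin.ext
    omega
  · rintro ⟨β, β'⟩ ⟨hβ, hlt, -⟩ hj
    rw [ext _ _ I hI, ext _ _ I hI]
    have := congrArg Fin.val (key β β' hβ hlt hj)
    simp only
    omega
end

section
/- Let ⟨α,α'⟩ be an (m,n)-shuffle. The assignment sending each i ∈ ⌞⟨α,α'⟩ to the unique (m,n)-shuffle ⟨β,β'⟩ with β(j) = α(j) for j ≠ i and β(i) = α(i) − 1 is a bijection between the lower-right corner set ⌞⟨α,α'⟩ and the set of immediate predecessors of ⟨α,α'⟩ in the poset of (m,n)-shuffles. -/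
lemma ext_val {N M : ℕ} (f : Fin (N + 1) → Fin (M + 1)) (j : Fin (N + 1)) :
    extendFin f (j : ℕ) = (f j : ℕ) := by
  unfold extendFin
  congr 2
  ext
  simp
  omega

lemma ext_mk {N M : ℕ} (f : Fin (N + 1) → Fin (M + 1)) (j : ℕ) (h : j < N + 1) :
    extendFin f j = (f ⟨j, h⟩ : ℕ) := ext_val f ⟨j, h⟩

lemma mono_surj {N M : ℕ} (f : Fin (N + 1) → Fin (M + 1))
    (h0 : extendFin f 0 = 0) (hN : extendFin f N = M)
    (hs : ∀ i < N, extendFin f i ≤ extendFin f (i+1) ∧ extendFin f (i+1) ≤ extendFin f i + 1) :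
    Monotone f ∧ Function.Surjective f := by
  constructor
  · rw [Fin.monotone_iff_le_succ]
    intro i
    have := (hs i i.2).1
    rw [ext_mk f i (by omega), ext_mk f (i+1) (by omega)] at this
    exact this
  · have key : ∀ i ≤ N, ∀ k ≤ extendFin f i, ∃ j ≤ N, extendFin f j = k := by
      intro i
      induction i with
      | zero => intro _ k hk; exact ⟨0, by omega, by omega⟩
      | succ i ih =>
        intro hi k hk
        by_cases h : k ≤ extendFin f i
        · exact ih (by omega) k h
        · exact ⟨i+1, hi, by have := hs i (by omega); omega⟩
    intro y
    obtain ⟨j, hj, h⟩ := key N le_rfl y (by have := y.2; omega)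
    refine ⟨⟨j, by omega⟩, ?_⟩
    ext
    rw [← h, ext_mk f j (by omega)]

lemma shuffle_iff (m n : ℕ) (α : Fin (m + n + 1) → Fin (m + 1))
    (α' : Fin (m + n + 1) → Fin (n + 1)) : IsShuffle m n α α' ↔
    (∀ i ≤ m + n, extendFin α i + extendFin α' i = i) ∧ extendFin α (m+n) = m ∧
    ∀ i < m + n, extendFin α i ≤ extendFin α (i+1) ∧
      extendFin α (i+1) ≤ extendFin α i + 1 := by
  constructor
  · rintro ⟨h1, h2, h3, h4, h5⟩
    have hsum : ∀ i ≤ m + n, extendFin α i + extendFin α' i = i := by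
      intro i hi
      have := h5 ⟨i, by omega⟩
      rw [ext_mk α i (by omega), ext_mk α' i (by omega)]
      exact this
    refine ⟨hsum, ?_, ?_⟩
    · obtain ⟨j, hj⟩ := h3 (Fin.last m)
      have h : α j ≤ α (Fin.last _) := h1 (Fin.le_last j)
      rw [hj] at h
      have h' := Fin.last_le_iff.1 h
      have := ext_val α (Fin.last _)
      rw [h'] at this
      simpa using this
    · intro i hi
      have a1 : extendFin α i ≤ extendFin α (i+1) := by
        rw [ext_mk α i (by omega), ext_mk α (i+1) (by omega)]
        exact h1 (Fin.mk_le_mk.2 (by omega))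
      have a2 : extendFin α' i ≤ extendFin α' (i+1) := by
        rw [ext_mk α' i (by omega), ext_mk α' (i+1) (by omega)]
        exact h2 (Fin.mk_le_mk.2 (by omega))
      have := hsum i (by omega)
      have := hsum (i+1) (by omega)
      omega
  · rintro ⟨hsum, hN, hs⟩
    have h0 := hsum 0 (by omega)
    have hNN := hsum (m+n) le_rfl
    obtain ⟨p, q⟩ := mono_surj α (by omega) hN hs
    obtain ⟨p', q'⟩ := mono_surj α' (by omega) (by omega) (by
      intro i hi
      have := hsum i (by omega)
      have := hsum (i+1) (by omega)
      have := hs i hi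
      omega)
    refine ⟨p, p', q, q', fun i => ?_⟩
    rw [← ext_val, ← ext_val]
    exact hsum i (by omega)

/-- lower the value at `i` by one -/
def lowerAt (m n : ℕ) (α : Fin (m + n + 1) → Fin (m + 1)) (α' : Fin (m + n + 1) → Fin (n + 1))
    (i : ℕ) : (Fin (m + n + 1) → Fin (m + 1)) × (Fin (m + n + 1) → Fin (n + 1)) :=
  (fun j => if (j : ℕ) = i then ⟨(α j : ℕ) - 1, by have := (α j).2; omega⟩ else α j,
   fun j => if (j : ℕ) = i then ⟨min ((α' j : ℕ) + 1) n, by omega⟩ else α' j)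

lemma lower_fst (m n : ℕ) (α : Fin (m + n + 1) → Fin (m + 1))
    (α' : Fin (m + n + 1) → Fin (n + 1)) (i j : ℕ) (hj : j ≤ m + n) :
    extendFin (lowerAt m n α α' i).1 j = if j = i then extendFin α j - 1 else extendFin α j := by
  rw [ext_mk _ j (by omega), ext_mk α j (by omega)]
  simp only [lowerAt]
  split_ifs <;> rfl

lemma lower_snd (m n : ℕ) (α : Fin (m + n + 1) → Fin (m + 1))
    (α' : Fin (m + n + 1) → Fin (n + 1)) (i j : ℕ) (hj : j ≤ m + n) :
    extendFin (lowerAt m n α α' i).2 j =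
      if j = i then min (extendFin α' j + 1) n else extendFin α' j := by
  rw [ext_mk _ j (by omega), ext_mk α' j (by omega)]
  simp only [lowerAt]
  split_ifs <;> rfl

lemma ext_le {N M : ℕ} (f : Fin (N + 1) → Fin (M + 1)) (j : ℕ) : extendFin f j ≤ M := by
  unfold extendFin; omega

lemma fun_ext {N M : ℕ} {f g : Fin (N + 1) → Fin (M + 1)}
    (h : ∀ j ≤ N, extendFin f j = extendFin g j) : f = g := by
  funext j
  ext
  rw [← ext_val, ← ext_val]
  exact h j (by omega)

lemma sle_iff (m n : ℕ) (α β : Fin (m + n + 1) → Fin (m + 1)) :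
    ShuffleLE m n α β ↔ ∀ j ≤ m + n, extendFin α j ≤ extendFin β j := by
  constructor
  · intro h j hj
    rw [ext_mk α j (by omega), ext_mk β j (by omega)]
    exact h _
  · intro h j
    rw [Fin.le_def, ← ext_val, ← ext_val]
    exact h j (by omega)

lemma lower_shuffle (m n : ℕ) (α : Fin (m + n + 1) → Fin (m + 1))
    (α' : Fin (m + n + 1) → Fin (n + 1)) (hα : IsShuffle m n α α') (i : ℕ)
    (hi : i ∈ lrCorner m n α) :
    IsShuffle m n (lowerAt m n α α' i).1 (lowerAt m n α α' i).2 := by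
  obtain ⟨i1, i2, i3, i4⟩ := hi
  rw [shuffle_iff] at hα ⊢
  obtain ⟨hsum, hN, hs⟩ := hα
  refine ⟨fun j hj => ?_, ?_, fun j hj => ?_⟩
  · rw [lower_fst _ _ _ _ _ _ hj, lower_snd _ _ _ _ _ _ hj]
    have a1 := hsum j hj
    split_ifs with h
    · subst h
      have := hsum (j+1) i2
      have := ext_le α' (j+1)
      omega
    · exact a1
  · rw [lower_fst _ _ _ _ _ _ le_rfl, if_neg (by omega), hN]
  · rw [lower_fst _ _ _ _ _ _ (by omega), lower_fst _ _ _ _ _ _ (by omega)]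
    have a1 := hs j hj
    split_ifs with h h' h'
    · omega
    · subst h; omega
    · subst h'; simp at i4; omega
    · exact a1

lemma lower_lt (m n : ℕ) (α : Fin (m + n + 1) → Fin (m + 1))
    (α' : Fin (m + n + 1) → Fin (n + 1)) (i : ℕ)
    (hi : i ∈ lrCorner m n α) :
    ShuffleLT m n (lowerAt m n α α' i).1 α := by
  obtain ⟨i1, i2, i3, i4⟩ := hi
  constructor
  · rw [sle_iff]
    intro j hj
    rw [lower_fst _ _ _ _ _ _ hj]
    split_ifs <;> omega
  · intro h
    have := lower_fst m n α α' i i (by omega)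
    rw [h, if_pos rfl] at this
    omega

lemma exists_corner (m n : ℕ) (α β : Fin (m + n + 1) → Fin (m + 1))
    (α' β' : Fin (m + n + 1) → Fin (n + 1)) (hα : IsShuffle m n α α') (hβ : IsShuffle m n β β')
    (h : ShuffleLT m n β α) : ∃ i ∈ lrCorner m n α, extendFin β i < extendFin α i := by
  rw [shuffle_iff] at hα hβ
  obtain ⟨as, aN, ast⟩ := hα
  obtain ⟨bs, bN, bst⟩ := hβ
  obtain ⟨hle, hne⟩ := h
  rw [sle_iff] at hle
  have key : ∀ d i, i + d = m + n → 1 ≤ i → extendFin β i < extendFin α i →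
      extendFin α i = extendFin α (i-1) + 1 →
      ∃ i ∈ lrCorner m n α, extendFin β i < extendFin α i := by
    intro d
    induction d with
    | zero =>
      intro i hi _ h _
      obtain rfl : i = m + n := by omega
      omega
    | succ d ih =>
      intro i hi h1 h2 h3
      have a1 := ast i (by omega)
      have b1 := bst i (by omega)
      by_cases h : extendFin α (i+1) = extendFin α i
      · exact ⟨i, ⟨h1, by omega, h, h3⟩, h2⟩
      · exact ih (i+1) (by omega) (by omega) (by omega) (by simp; omega)
  have hex : ∃ j, j ≤ m + n ∧ extendFin β j < extendFin α j := by
    by_contra hc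
    push Not at hc
    exact hne (fun_ext fun j hj => le_antisymm (hle j hj) (hc j hj))
  classical
  obtain ⟨hj, hlt⟩ := Nat.find_spec hex
  have hmin := fun k => @Nat.find_min _ _ hex k
  generalize Nat.find hex = j at hj hlt hmin
  rcases j with _ | j
  · have := as 0 (by omega); omega
  · have h1 := hmin j (by omega)
    have a1 := ast j (by omega)
    have b1 := bst j (by omega)
    have : ¬ extendFin β j < extendFin α j := fun h => h1 ⟨by omega, h⟩
    have := hle j (by omega)
    exact key (m + n - (j+1)) (j+1) (by omega) (by omega) hlt (by simp; omega)

/-- The assignment sending each `i` in the lower-right corner set of a shuffle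
`⟨α,α'⟩` to the unique shuffle agreeing with `α` away from `i` and taking the
value `α i - 1` at `i` is a bijection onto the set of immediate predecessors of
`⟨α,α'⟩`. -/
theorem lrCorner_bijOn_immPred (m n : ℕ)
    (α : Fin (m + n + 1) → Fin (m + 1)) (α' : Fin (m + n + 1) → Fin (n + 1))
    (hα : IsShuffle m n α α') :
    ∃ Φ : ℕ → (Fin (m + n + 1) → Fin (m + 1)) × (Fin (m + n + 1) → Fin (n + 1)),
      (∀ i ∈ lrCorner m n α,
        (∀ j : Fin (m + n + 1), (j : ℕ) ≠ i → (Φ i).1 j = α j) ∧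
          extendFin (Φ i).1 i = extendFin α i - 1) ∧
      Set.BijOn Φ (lrCorner m n α)
        {p : (Fin (m + n + 1) → Fin (m + 1)) × (Fin (m + n + 1) → Fin (n + 1)) |
          IsImmPred m n p.1 p.2 α α'} := by
  refine ⟨lowerAt m n α α', ?_, ?_, ?_, ?_⟩
  · intro i hi
    have hi2 := hi.2.1
    refine ⟨fun j hj => by simp [lowerAt, hj], ?_⟩
    rw [lower_fst _ _ _ _ _ _ (by omega), if_pos rfl]
  · intro i hi
    refine ⟨lower_shuffle m n α α' hα i hi, lower_lt m n α α' i hi, ?_⟩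
    rintro γ γ' hγ ⟨⟨h1, h2⟩, h3, h4⟩
    rw [sle_iff] at h1 h3
    have hi2 := hi.2.1
    have e1 := h1 i (by omega)
    have e3 := h3 i (by omega)
    rw [lower_fst _ _ _ _ _ _ (by omega), if_pos rfl] at e1
    have off : ∀ j ≤ m + n, j ≠ i → extendFin γ j = extendFin α j := by
      intro j hj hji
      have e1 := h1 j hj
      rw [lower_fst _ _ _ _ _ _ hj, if_neg hji] at e1
      exact le_antisymm (h3 j hj) e1
    by_cases h : extendFin γ i = extendFin α i
    · refine h4 (fun_ext fun j hj => ?_)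
      by_cases hji : j = i
      · rw [hji, h]
      · exact off j hj hji
    · refine h2 (fun_ext fun j hj => ?_)
      rw [lower_fst _ _ _ _ _ _ hj]
      split_ifs with hji
      · subst hji; omega
      · exact (off j hj hji).symm
  · intro i hi k hk hik
    by_contra hne
    obtain ⟨i1, i2, i3, i4⟩ := hi
    have e1 := lower_fst m n α α' i i (by omega)
    have e2 := lower_fst m n α α' k i (by omega)
    rw [if_pos rfl, hik] at e1
    rw [if_neg hne] at e2
    omega
  · rintro ⟨β, β'⟩ ⟨hβ, hlt, hno⟩
    dsimp only at hβ hlt hno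
    obtain ⟨i, hi, hbi⟩ := exists_corner m n α β α' β' hα hβ hlt
    refine ⟨i, hi, ?_⟩
    have hsh := lower_shuffle m n α α' hα i hi
    have heq : β = (lowerAt m n α α' i).1 := by
      by_contra hne
      refine hno _ _ hsh ⟨⟨?_, hne⟩, lower_lt m n α α' i hi⟩
      have hle := hlt.1
      rw [sle_iff] at hle ⊢
      intro j hj
      rw [lower_fst _ _ _ _ _ _ hj]
      have := hle j hj
      split_ifs with hji
      · subst hji; omega
      · exact this
    refine Prod.ext heq.symm (fun_ext fun j hj => ?_)
    have s1 := ((shuffle_iff _ _ _ _).1 hsh).1 j hj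
    have s2 := ((shuffle_iff _ _ _ _).1 hβ).1 j hj
    rw [← heq] at s1
    dsimp only
    omega
end

section
/- Let ⟨α,α'⟩ be an (m,n)-shuffle. Then for any i with 1 ≤ i ≤ m+n−1, precisely one of the following four conditions holds: (a) i ∈ ⌞⟨α,α'⟩; (b) i ∈ ⌜⟨α,α'⟩; (c) the fibre α⁻¹(α(i)) equals the singleton {i}; (d) the fibre (α')⁻¹(α'(i)) equals the singleton {i}. -/
theorem fibre_iff_aux {N M : ℕ} (f : Fin (N + 1) → Fin (M + 1)) (hf : Monotone f)
    (p i s : Fin (N + 1)) (hp : (p : ℕ) + 1 = i) (hs : (s : ℕ) = i + 1) :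
    f ⁻¹' {f i} = {i} ↔ ((f p : ℕ) ≠ f i ∧ (f s : ℕ) ≠ f i) := by
  constructor
  · intro h
    have key : ∀ x, f x = f i → x = i := fun x hx => by
      have : x ∈ f ⁻¹' {f i} := hx
      rw [h] at this
      exact this
    refine ⟨fun e => ?_, fun e => ?_⟩
    · have := key p (Fin.ext e)
      subst this
      omega
    · have := key s (Fin.ext e)
      subst this
      omega
  · rintro ⟨h1, h2⟩
    ext x
    simp only [Set.mem_preimage, Set.mem_singleton_iff]
    refine ⟨fun hx => ?_, fun hx => by rw [hx]⟩
    by_contra hne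
    have hne' : (x : ℕ) ≠ i := fun e => hne (Fin.ext e)
    have hpi : f p ≤ f i := hf (Fin.le_def.2 (by omega))
    have his : f i ≤ f s := hf (Fin.le_def.2 (by omega))
    rcases Nat.lt_or_gt_of_ne hne' with h | h
    · have h3 : f x ≤ f p := hf (Fin.le_def.2 (by omega))
      rw [hx] at h3
      exact h1 (congrArg Fin.val (le_antisymm hpi h3))
    · have h3 : f s ≤ f x := hf (Fin.le_def.2 (by omega))
      rw [hx] at h3
      exact h2 (congrArg Fin.val (le_antisymm h3 his))

/-- For an `(m,n)`-shuffle `⟨α,α'⟩` and any `1 ≤ i ≤ m+n-1`, exactly one of the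
following holds: `i` is a lower-right corner, `i` is an upper-left corner, the
fibre of `α` over `α i` is `{i}`, or the fibre of `α'` over `α' i` is `{i}`. -/
theorem corner_or_singleton_fibre (m n : ℕ)
    (α : Fin (m + n + 1) → Fin (m + 1)) (α' : Fin (m + n + 1) → Fin (n + 1))
    (hα : IsShuffle m n α α')
    (i : Fin (m + n + 1)) (h1 : 1 ≤ (i : ℕ)) (h2 : (i : ℕ) + 1 ≤ m + n) :
    ((i : ℕ) ∈ lrCorner m n α ∨ (i : ℕ) ∈ ulCorner m n α ∨
        α ⁻¹' {α i} = {i} ∨ α' ⁻¹' {α' i} = {i}) ∧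
    ¬((i : ℕ) ∈ lrCorner m n α ∧ (i : ℕ) ∈ ulCorner m n α) ∧
    ¬((i : ℕ) ∈ lrCorner m n α ∧ α ⁻¹' {α i} = {i}) ∧
    ¬((i : ℕ) ∈ lrCorner m n α ∧ α' ⁻¹' {α' i} = {i}) ∧
    ¬((i : ℕ) ∈ ulCorner m n α ∧ α ⁻¹' {α i} = {i}) ∧
    ¬((i : ℕ) ∈ ulCorner m n α ∧ α' ⁻¹' {α' i} = {i}) ∧
    ¬(α ⁻¹' {α i} = {i} ∧ α' ⁻¹' {α' i} = {i}) := by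
  obtain ⟨hm, hm', -, -, hsum⟩ := hα
  obtain ⟨p, hp⟩ : ∃ p : Fin (m + n + 1), (p : ℕ) + 1 = i := ⟨⟨i - 1, by omega⟩, by simp; omega⟩
  obtain ⟨s, hs⟩ : ∃ s : Fin (m + n + 1), (s : ℕ) = i + 1 := ⟨⟨i + 1, by omega⟩, rfl⟩
  rw [fibre_iff_aux α hm p i s hp hs, fibre_iff_aux α' hm' p i s hp hs]
  have e1 : extendFin α (i + 1) = α s := by
    unfold extendFin
    congr 2
    apply Fin.ext
    simp only
    omega
  have e2 : extendFin α i = α i := by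
    unfold extendFin
    congr 2
    apply Fin.ext
    simp only
    omega
  have e3 : extendFin α (i - 1) = α p := by
    unfold extendFin
    congr 2
    apply Fin.ext
    simp only
    omega
  simp only [lrCorner, ulCorner, Set.mem_setOf_eq, e1, e2, e3]
  have a1 : (α p : ℕ) ≤ α i := hm (Fin.le_def.2 (by omega))
  have a2 : (α i : ℕ) ≤ α s := hm (Fin.le_def.2 (by omega))
  have b1 : (α' p : ℕ) ≤ α' i := hm' (Fin.le_def.2 (by omega))
  have b2 : (α' i : ℕ) ≤ α' s := hm' (Fin.le_def.2 (by omega))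
  have c1 := hsum p
  have c2 := hsum i
  have c3 := hsum s
  refine ⟨?_, ?_, ?_, ?_, ?_, ?_, ?_⟩ <;> omega
end

section
/- Let m, n, u be natural numbers and let ζ : {0,…,u} → {0,…,m} and ζ' : {0,…,u} → {0,…,n} be order-preserving maps. Then there exist an (m,n)-shuffle ⟨β,β'⟩ and an order-preserving map φ : {0,…,u} → {0,…,m+n} such that ζ = β ∘ φ and ζ' = β' ∘ φ. (This expresses that the (m,n)-shuffles are the maximal non-degenerate simplices of Δ[m] × Δ[n]: every simplex of the product factors through a shuffle.) -/
theorem discrete_ivt_aux (b : ℕ → ℕ) (h0 : b 0 = 0) (h1 : ∀ k, b (k + 1) ≤ b k + 1)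
    (N c : ℕ) (hc : c ≤ b N) : ∃ k, k ≤ N ∧ b k = c := by
  induction N with
  | zero => exact ⟨0, le_rfl, by omega⟩
  | succ N ih =>
    by_cases h : c ≤ b N
    · obtain ⟨k, hk, hk'⟩ := ih h
      exact ⟨k, by omega, hk'⟩
    · exact ⟨N + 1, le_rfl, by have := h1 N; omega⟩

theorem interp_aux (m n u : ℕ)
    (ζ : Fin (u + 1) → Fin (m + 1)) (ζ' : Fin (u + 1) → Fin (n + 1))
    (hζ : Monotone ζ) (hζ' : Monotone ζ') :
    ∃ b : ℕ → ℕ, b 0 = 0 ∧ b (m + n) = m ∧ (∀ k, b k ≤ b (k + 1)) ∧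
      (∀ k, b (k + 1) ≤ b k + 1) ∧ ∀ i, b (ζ i + ζ' i) = ζ i := by
  let g : ℕ → Fin (u + 1) → ℕ := fun k i => (ζ i : ℕ) + (k - (ζ i + ζ' i))
  let f : ℕ → ℕ := fun k => Finset.univ.inf' Finset.univ_nonempty (g k)
  have hle : ∀ k i, f k ≤ g k i := fun k i => Finset.inf'_le _ (Finset.mem_univ i)
  have hex : ∀ k, ∃ i, f k = g k i := fun k => by
    obtain ⟨i, -, hi⟩ := Finset.exists_mem_eq_inf' Finset.univ_nonempty (g k)
    exact ⟨i, hi⟩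
  refine ⟨fun k => min m (min k (f k)), by simp, ?_, ?_, ?_, ?_⟩
  · obtain ⟨i, hi⟩ := hex (m + n)
    have := (ζ i).isLt
    have := (ζ' i).isLt
    simp only [g] at hi
    show min m (min (m + n) (f (m + n))) = m
    omega
  · intro k
    obtain ⟨i, hi⟩ := hex (k + 1)
    have h2 := hle k i
    simp only [g] at hi h2
    show min m (min k (f k)) ≤ min m (min (k + 1) (f (k + 1)))
    omega
  · intro k
    obtain ⟨i, hi⟩ := hex k
    have h2 := hle (k + 1) i
    simp only [g] at hi h2
    show min m (min (k + 1) (f (k + 1))) ≤ min m (min k (f k)) + 1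
    omega
  · intro j
    obtain ⟨i, hi⟩ := hex (ζ j + ζ' j)
    have h2 := hle (ζ j + ζ' j) j
    have := (ζ j).isLt
    simp only [g] at hi h2
    show min m (min (ζ j + ζ' j : ℕ) (f (ζ j + ζ' j))) = ζ j
    rcases le_total i j with h | h
    · have a1 : (ζ i : ℕ) ≤ ζ j := hζ h
      have a2 : (ζ' i : ℕ) ≤ ζ' j := hζ' h
      omega
    · have a1 : (ζ j : ℕ) ≤ ζ i := hζ h
      omega

/-- Every pair of monotone maps `ζ : [u] → [m]`, `ζ' : [u] → [n]` factors through
an `(m,n)`-shuffle via a monotone map `φ : [u] → [m+n]`. -/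
theorem factors_through_shuffle (m n u : ℕ)
    (ζ : Fin (u + 1) → Fin (m + 1)) (ζ' : Fin (u + 1) → Fin (n + 1))
    (hζ : Monotone ζ) (hζ' : Monotone ζ') :
    ∃ (β : Fin (m + n + 1) → Fin (m + 1)) (β' : Fin (m + n + 1) → Fin (n + 1))
      (φ : Fin (u + 1) → Fin (m + n + 1)),
      IsShuffle m n β β' ∧ Monotone φ ∧
        (∀ i, ζ i = β (φ i)) ∧ (∀ i, ζ' i = β' (φ i)) := by
  obtain ⟨b, h0, hN, hm, hl, hb⟩ := interp_aux m n u ζ ζ' hζ hζ'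
  have hmono : Monotone b := monotone_nat_of_le_succ hm
  have hlek : ∀ k, b k ≤ k := fun k => by
    induction k with
    | zero => omega
    | succ k ih => have := hl k; omega
  have hcm : Monotone (fun k => k - b k) := monotone_nat_of_le_succ fun k => by
    have := hl k
    have := hlek k
    show k - b k ≤ k + 1 - b (k + 1)
    omega
  have hbm : ∀ k, k ≤ m + n → b k ≤ m := fun k hk => hN ▸ hmono hk
  have hcn : ∀ k, k ≤ m + n → k - b k ≤ n := fun k hk => by
    have : k - b k ≤ (m + n) - b (m + n) := hcm hk
    omega
  refine ⟨fun k => ⟨b k, Nat.lt_succ_of_le (hbm k (by omega))⟩,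
    fun k => ⟨k - b k, Nat.lt_succ_of_le (hcn k (by omega))⟩,
    fun i => ⟨ζ i + ζ' i, by omega⟩, ⟨?_, ?_, ?_, ?_, ?_⟩, ?_, ?_, ?_⟩
  · intro x y h
    exact hmono h
  · intro x y h
    exact hcm h
  · intro c
    obtain ⟨k, hk, e⟩ := discrete_ivt_aux b h0 hl (m + n) c (by omega)
    exact ⟨⟨k, by omega⟩, Fin.ext e⟩
  · intro c
    obtain ⟨k, hk, e⟩ := discrete_ivt_aux (fun k => k - b k) (by simp)
      (fun k => by
        have := hm k
        show k + 1 - b (k + 1) ≤ k - b k + 1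
        omega) (m + n) c (by
        show (c : ℕ) ≤ m + n - b (m + n)
        omega)
    exact ⟨⟨k, by omega⟩, Fin.ext e⟩
  · intro i
    have := hlek i
    show b i + (i - b i) = (i : ℕ)
    omega
  · intro x y h
    exact add_le_add (show (ζ x : ℕ) ≤ ζ y from hζ h) (show (ζ' x : ℕ) ≤ ζ' y from hζ' h)
  · intro i
    exact Fin.ext (hb i).symm
  · intro i
    apply Fin.ext
    have := hb i
    show (ζ' i : ℕ) = (ζ i + ζ' i) - b (ζ i + ζ' i)
    omega
end

section
/- Let m, n be natural numbers. The map αmax : {0,…,m+n} → {0,…,m} given by αmax(i) = min(i, m), together with α'max(i) = i − min(i, m), is an (m,n)-shuffle, and it is the greatest element of the poset of (m,n)-shuffles. Moreover, an (m,n)-shuffle ⟨α,α'⟩ satisfies ⌜⟨α,α'⟩ = ∅ if and only if ⟨α,α'⟩ is this maximum shuffle. -/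
/-- The first component of the maximum `(m,n)`-shuffle: `i ↦ min i m`. -/
def maxShuffleFst (m n : ℕ) : Fin (m + n + 1) → Fin (m + 1) :=
  fun i => ⟨min (i : ℕ) m, by have := i.isLt; omega⟩

/-- The second component of the maximum `(m,n)`-shuffle: `i ↦ i - min i m`. -/
def maxShuffleSnd (m n : ℕ) : Fin (m + n + 1) → Fin (n + 1) :=
  fun i => ⟨(i : ℕ) - min (i : ℕ) m, by have := i.isLt; omega⟩

/-- The pair `(i ↦ min i m, i ↦ i - min i m)` is an `(m,n)`-shuffle, it is the
greatest element of the poset of `(m,n)`-shuffles, and a shuffle has empty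
upper-left corner set iff it is this maximum shuffle. -/
theorem maxShuffle_spec (m n : ℕ) :
    IsShuffle m n (maxShuffleFst m n) (maxShuffleSnd m n) ∧
    (∀ (α : Fin (m + n + 1) → Fin (m + 1)) (α' : Fin (m + n + 1) → Fin (n + 1)),
      IsShuffle m n α α' → ShuffleLE m n α (maxShuffleFst m n)) ∧
    (∀ (α : Fin (m + n + 1) → Fin (m + 1)) (α' : Fin (m + n + 1) → Fin (n + 1)),
      IsShuffle m n α α' →
        (ulCorner m n α = ∅ ↔ α = maxShuffleFst m n ∧ α' = maxShuffleSnd m n)) := by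
  refine ⟨⟨?_, ?_, ?_, ?_, ?_⟩, ?_, ?_⟩
  · intro a b h
    have h' : (a : ℕ) ≤ b := h
    simp only [maxShuffleFst, Fin.mk_le_mk]
    omega
  · intro a b h
    have h' : (a : ℕ) ≤ b := h
    simp only [maxShuffleSnd, Fin.mk_le_mk]
    omega
  · intro b
    have := b.isLt
    refine ⟨⟨b, by omega⟩, ?_⟩
    apply Fin.ext
    simp only [maxShuffleFst]
    omega
  · intro b
    have := b.isLt
    refine ⟨⟨m + b, by omega⟩, ?_⟩
    apply Fin.ext
    simp only [maxShuffleSnd]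
    omega
  · intro i
    simp only [maxShuffleFst, maxShuffleSnd]
    omega
  · intro α α' h i
    have h1 := h.2.2.2.2 i
    have h2 := (α i).isLt
    rw [Fin.le_def]
    simp only [maxShuffleFst]
    omega
  · intro α α' h
    obtain ⟨hm, hm', hs, hs', hsum⟩ := h
    constructor
    · intro hE
      have key : ∀ i (hi : i < m + n + 1), extendFin α i = (α ⟨i, hi⟩ : ℕ) := by
        intro i hi
        have : min i (m + n) = i := by omega
        simp only [extendFin, this]
      have step : ∀ i, i + 1 ≤ m + n → extendFin α i ≤ extendFin α (i + 1) ∧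
          extendFin α (i + 1) ≤ extendFin α i + 1 := by
        intro i hi
        rw [key i (by omega), key (i + 1) (by omega)]
        have a1 := hsum ⟨i, by omega⟩
        have a2 := hsum ⟨i + 1, by omega⟩
        have le : (⟨i, by omega⟩ : Fin (m + n + 1)) ≤ ⟨i + 1, by omega⟩ := by
          simp
        have b1 : ((α ⟨i, by omega⟩ : Fin _) : ℕ) ≤ α ⟨i + 1, by omega⟩ := hm le
        have b2 : ((α' ⟨i, by omega⟩ : Fin _) : ℕ) ≤ α' ⟨i + 1, by omega⟩ := hm' le
        simp only at a1 a2
        omega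
      have e0 : extendFin α 0 = 0 := by
        rw [key 0 (by omega)]
        have := hsum ⟨0, by omega⟩
        simp only at this
        omega
      have eN : extendFin α (m + n) = m := by
        rw [key (m + n) (by omega)]
        have := hsum ⟨m + n, by omega⟩
        have h1 := (α ⟨m + n, by omega⟩).isLt
        have h2 := (α' ⟨m + n, by omega⟩).isLt
        simp only at this
        omega
      have noc : ∀ i, i + 2 ≤ m + n → extendFin α (i + 1) = extendFin α i →
          extendFin α (i + 2) = extendFin α (i + 1) := by
        intro i hi h1
        have h2 := step (i + 1) (by omega)
        by_contra h3
        have : i + 1 ∈ ulCorner m n α := by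
          refine ⟨by omega, by omega, ?_, ?_⟩
          · change extendFin α (i + 2) = _
            have h2' : extendFin α (i + 1) ≤ extendFin α (i + 2) ∧
              extendFin α (i + 2) ≤ extendFin α (i + 1) + 1 := h2
            omega
          · simpa using h1
        rw [hE] at this
        exact this
      have flat : ∀ i, extendFin α (i + 1) = extendFin α i → ∀ k, i + 1 + k ≤ m + n →
          extendFin α (i + 1 + k) = extendFin α i ∧
          extendFin α (i + k) = extendFin α i := by
        intro i h1 k
        induction k with
        | zero => intro _; exact ⟨h1, rfl⟩
        | succ k ih =>
          intro hk
          have ⟨c1, c2⟩ := ih (by omega)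
          have e1 : i + 1 + k = i + k + 1 := by omega
          have e2 : i + 1 + (k + 1) = i + k + 2 := by omega
          have e3 : i + (k + 1) = i + k + 1 := by omega
          rw [e1] at c1
          rw [e2, e3]
          have := noc (i + k) (by omega) (by omega)
          omega
      have main : ∀ i, i ≤ m + n → extendFin α i = min i m := by
        intro i
        induction i with
        | zero => intro _; omega
        | succ i ih =>
          intro hi
          have h1 := ih (by omega)
          have h2 := step i hi
          have h3 : extendFin α (i + 1) ≤ m := by
            rw [key (i + 1) (by omega)]
            have := (α ⟨i + 1, by omega⟩).isLt
            omega
          by_cases hc : extendFin α (i + 1) = extendFin α i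
          · have := (flat i hc (m + n - (i + 1)) (by omega)).1
            rw [Nat.add_sub_cancel' hi, eN] at this
            omega
          · omega
      have hα : ∀ i : Fin (m + n + 1), (α i : ℕ) = min (i : ℕ) m := by
        intro i
        rw [← main i (by omega), key i i.isLt]
      constructor
      · funext i
        apply Fin.ext
        simp only [maxShuffleFst]
        exact hα i
      · funext i
        apply Fin.ext
        simp only [maxShuffleSnd]
        have := hα i
        have := hsum i
        omega
    · rintro ⟨rfl, -⟩
      ext i
      simp only [ulCorner, extendFin, maxShuffleFst, Set.mem_setOf_eq, Set.mem_empty_iff_false,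
        iff_false]
      omega
end

section
/- Let ⟨α,α'⟩, ⟨β,β'⟩ and ⟨γ,γ'⟩ be (m,n)-shuffles with ⟨α,α'⟩ ≤ ⟨β,β'⟩, and suppose ⟨γ,γ'⟩ ≱ ⟨α,α'⟩ (i.e. it is not the case that γ(i) ≥ α(i) for all i). Then there exists an index j such that γ(j) ≠ β(j) and, in addition, either j ∉ ⌞⟨β,β'⟩ or β(j) = α(j). -/
/-- If `⟨α,α'⟩ ≤ ⟨β,β'⟩` are shuffles and `⟨γ,γ'⟩` is a shuffle with
`⟨γ,γ'⟩ ≱ ⟨α,α'⟩`, then there is an index `j` with `γ j ≠ β j` such that either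
`j` is not a lower-right corner of `⟨β,β'⟩` or `β j = α j`. -/
theorem exists_ne_index (m n : ℕ)
    (α : Fin (m + n + 1) → Fin (m + 1)) (α' : Fin (m + n + 1) → Fin (n + 1))
    (β : Fin (m + n + 1) → Fin (m + 1)) (β' : Fin (m + n + 1) → Fin (n + 1))
    (γ : Fin (m + n + 1) → Fin (m + 1)) (γ' : Fin (m + n + 1) → Fin (n + 1))
    (hα : IsShuffle m n α α') (hβ : IsShuffle m n β β') (hγ : IsShuffle m n γ γ')
    (hab : ShuffleLE m n α β) (hna : ¬ ShuffleLE m n α γ) :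
    ∃ j : Fin (m + n + 1), γ j ≠ β j ∧
      ((j : ℕ) ∉ lrCorner m n β ∨ β j = α j) := by
  by_contra hcon
  push Not at hcon
  simp only [ShuffleLE, not_forall, not_le] at hna
  obtain ⟨i, hi⟩ := hna
  have hle := hab i
  obtain ⟨hc, hne⟩ := hcon i (ne_of_lt (lt_of_lt_of_le hi hle))
  obtain ⟨h1, h2, h3, h4⟩ := hc
  have hk : (i : ℕ) - 1 < m + n + 1 := by omega
  have e0 : extendFin β (i : ℕ) = β i := by
    unfold extendFin
    congr 2
    apply Fin.ext
    simp only []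
    omega
  have e1 : extendFin β ((i : ℕ) - 1) = β ⟨(i : ℕ) - 1, hk⟩ := by
    unfold extendFin
    congr 2
    apply Fin.ext
    simp only []
    omega
  have hm : γ ⟨(i : ℕ) - 1, hk⟩ ≤ γ i := hγ.1 (by
    rw [Fin.le_def]
    simp only []
    omega)
  have hne' : (β i : ℕ) ≠ α i := fun h => hne (Fin.ext h)
  rw [Fin.lt_def] at hi
  rw [Fin.le_def] at hle hm
  have hd : γ ⟨(i : ℕ) - 1, hk⟩ ≠ β ⟨(i : ℕ) - 1, hk⟩ := by
    intro h
    rw [h] at hm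
    omega
  obtain ⟨⟨_, _, h7, _⟩, _⟩ := hcon _ hd
  simp only [] at h7
  rw [Nat.sub_add_cancel h1] at h7
  omega
end

section
/- Let ⟨α,α'⟩ and ⟨β,β'⟩ be (m,n)-shuffles with ⟨α,α'⟩ < ⟨β,β'⟩. Then there exists an immediate predecessor ⟨γ,γ'⟩ of ⟨β,β'⟩ with ⟨α,α'⟩ ≤ ⟨γ,γ'⟩; equivalently, there exists j ∈ ⌞⟨β,β'⟩ with β(j) > α(j), and the shuffle obtained from β by decreasing its value at j by 1 (and leaving all other values unchanged) is an immediate predecessor of ⟨β,β'⟩ lying above ⟨α,α'⟩. -/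
theorem ext_eq {N M : ℕ} (f : Fin (N + 1) → Fin (M + 1)) (i : ℕ) (h : i < N + 1) :
    extendFin f i = (f ⟨i, h⟩ : ℕ) := by
  unfold extendFin
  congr 2
  simp; omega

theorem shuffle_step {m n : ℕ} {α : Fin (m + n + 1) → Fin (m + 1)}
    {α' : Fin (m + n + 1) → Fin (n + 1)} (hα : IsShuffle m n α α') (i : ℕ) (h : i + 1 < m + n + 1) :
    (α ⟨i + 1, h⟩ : ℕ) = α ⟨i, by omega⟩ ∨ (α ⟨i + 1, h⟩ : ℕ) = α ⟨i, by omega⟩ + 1 := by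
  obtain ⟨h1, h2, -, -, h5⟩ := hα
  have hle : (⟨i, by omega⟩ : Fin (m + n + 1)) ≤ ⟨i + 1, h⟩ := by simp
  have a1 := h1 hle
  have a2 := h2 hle
  have a3 := h5 ⟨i, by omega⟩
  have a4 := h5 ⟨i + 1, h⟩
  simp only [Fin.le_def] at a1 a2 a3 a4
  omega

theorem find_corner {m n : ℕ}
    {α : Fin (m + n + 1) → Fin (m + 1)} {α' : Fin (m + n + 1) → Fin (n + 1)}
    {β : Fin (m + n + 1) → Fin (m + 1)} {β' : Fin (m + n + 1) → Fin (n + 1)}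
    (hα : IsShuffle m n α α') (hβ : IsShuffle m n β β') (t : ℕ) :
    ∀ (i : ℕ) (h : i + 1 < m + n + 1), m + n - i = t →
      (α ⟨i + 1, h⟩ : ℕ) < β ⟨i + 1, h⟩ → (β ⟨i + 1, h⟩ : ℕ) = β ⟨i, by omega⟩ + 1 →
      ∃ (j : ℕ) (hj : j + 2 < m + n + 1), (α ⟨j + 1, by omega⟩ : ℕ) < β ⟨j + 1, by omega⟩ ∧
        (β ⟨j + 1, by omega⟩ : ℕ) = β ⟨j, by omega⟩ + 1 ∧
        (β ⟨j + 2, hj⟩ : ℕ) = β ⟨j + 1, by omega⟩ := by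
  induction t with
  | zero => intro i h ht; omega
  | succ t ih =>
    intro i h ht h1 h2
    have hi : i + 2 < m + n + 1 := by
      by_contra hc
      have a1 := hα.2.2.2.2 ⟨i + 1, h⟩
      have b1 := hβ.2.2.2.2 ⟨i + 1, h⟩
      have a2 := (α ⟨i + 1, h⟩).2
      have b2 := (β ⟨i + 1, h⟩).2
      have a3 := (α' ⟨i + 1, h⟩).2
      have b3 := (β' ⟨i + 1, h⟩).2
      simp only at a1 b1
      omega
    rcases shuffle_step hβ (i + 1) hi with hs | hs
    · exact ⟨i, hi, h1, h2, hs⟩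
    · refine ih (i + 1) hi (by omega) ?_ hs
      have := shuffle_step hα (i + 1) hi
      omega

theorem find_start {m n : ℕ}
    {α : Fin (m + n + 1) → Fin (m + 1)} {α' : Fin (m + n + 1) → Fin (n + 1)}
    {β : Fin (m + n + 1) → Fin (m + 1)} {β' : Fin (m + n + 1) → Fin (n + 1)}
    (hα : IsShuffle m n α α') (hβ : IsShuffle m n β β') (hle : ShuffleLE m n α β) :
    ∀ (i : ℕ) (h : i < m + n + 1), (α ⟨i, h⟩ : ℕ) < β ⟨i, h⟩ →
      ∃ (j : ℕ) (hj : j + 1 < m + n + 1), (α ⟨j + 1, hj⟩ : ℕ) < β ⟨j + 1, hj⟩ ∧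
        (β ⟨j + 1, hj⟩ : ℕ) = β ⟨j, by omega⟩ + 1 := by
  intro i
  induction i with
  | zero =>
    intro h h1
    have b1 := hβ.2.2.2.2 ⟨0, h⟩
    simp only at b1
    omega
  | succ i ih =>
    intro h h1
    by_cases hc : (α ⟨i, by omega⟩ : ℕ) < β ⟨i, by omega⟩
    · exact ih _ hc
    · refine ⟨i, h, h1, ?_⟩
      have := shuffle_step hα i h
      have := shuffle_step hβ i h
      have := hle ⟨i, by omega⟩
      simp only [Fin.le_def] at this
      omega

theorem mono_of_step {N M : ℕ} (f : Fin (N + 1) → Fin (M + 1))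
    (h : ∀ (i : ℕ) (hi : i + 1 < N + 1), (f ⟨i, by omega⟩ : ℕ) ≤ f ⟨i + 1, hi⟩) : Monotone f := by
  refine Fin.monotone_iff_le_succ.2 fun i => ?_
  have := h i (by omega)
  exact this

/-- If `⟨α,α'⟩ < ⟨β,β'⟩` are shuffles then there is `j` in the lower-right corner
set of `⟨β,β'⟩` with `β j > α j`, and the shuffle obtained from `β` by decreasing
its value at `j` by one (leaving all other values unchanged) is an immediate
predecessor of `⟨β,β'⟩` lying above `⟨α,α'⟩`. -/
theorem exists_immPred_above (m n : ℕ)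
    (α : Fin (m + n + 1) → Fin (m + 1)) (α' : Fin (m + n + 1) → Fin (n + 1))
    (β : Fin (m + n + 1) → Fin (m + 1)) (β' : Fin (m + n + 1) → Fin (n + 1))
    (hα : IsShuffle m n α α') (hβ : IsShuffle m n β β')
    (hlt : ShuffleLT m n α β) :
    ∃ j ∈ lrCorner m n β, extendFin α j < extendFin β j ∧
      ∃ (γ : Fin (m + n + 1) → Fin (m + 1)) (γ' : Fin (m + n + 1) → Fin (n + 1)),
        IsShuffle m n γ γ' ∧
        (∀ k : Fin (m + n + 1), (k : ℕ) ≠ j → γ k = β k) ∧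
        extendFin γ j + 1 = extendFin β j ∧
        IsImmPred m n γ γ' β β' ∧
        ShuffleLE m n α γ := by
  obtain ⟨hle, hne⟩ := hlt
  have hex : ∃ i, (α i : ℕ) < β i := by
    by_contra hc
    push Not at hc
    exact hne (funext fun i => le_antisymm (hle i) (hc i))
  obtain ⟨⟨i, hi⟩, hlt⟩ := hex
  obtain ⟨i, hi, h1, h2⟩ := find_start hα hβ hle i hi hlt
  obtain ⟨j, hj, h1, h2, h3⟩ := find_corner hα hβ _ i hi rfl h1 h2
  have s0 := hβ.2.2.2.2 ⟨j, by omega⟩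
  have s1 := hβ.2.2.2.2 ⟨j + 1, by omega⟩
  have s2 := hβ.2.2.2.2 ⟨j + 2, hj⟩
  have l2 := (β' ⟨j + 2, hj⟩).2
  have l1 := (β ⟨j + 1, by omega⟩).2
  simp only at s0 s1 s2
  let γ : Fin (m + n + 1) → Fin (m + 1) := fun k =>
    if (k : ℕ) = j + 1 then ⟨β ⟨j + 1, by omega⟩ - 1, by omega⟩ else β k
  let γ' : Fin (m + n + 1) → Fin (n + 1) := fun k =>
    if (k : ℕ) = j + 1 then ⟨β' ⟨j + 1, by omega⟩ + 1, by omega⟩ else β' k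
  have g1 : ∀ k : Fin (m + n + 1), (k : ℕ) ≠ j + 1 → γ k = β k := fun k hk => by simp [γ, hk]
  have g1' : ∀ k : Fin (m + n + 1), (k : ℕ) ≠ j + 1 → γ' k = β' k := fun k hk => by simp [γ', hk]
  have g2 : (γ ⟨j + 1, by omega⟩ : ℕ) + 1 = β ⟨j + 1, by omega⟩ := by
    simp [γ]; omega
  have g2' : (γ' ⟨j + 1, by omega⟩ : ℕ) = β' ⟨j + 1, by omega⟩ + 1 := by
    simp [γ']
  have key : ∀ k : Fin (m + n + 1), k = ⟨j + 1, by omega⟩ ∨ (k : ℕ) ≠ j + 1 := fun k => by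
    rw [Fin.ext_iff]; exact em _
  have hγ : IsShuffle m n γ γ' := by
    refine ⟨mono_of_step _ fun i hi => ?_, mono_of_step _ fun i hi => ?_, fun v => ?_,
      fun v => ?_, fun k => ?_⟩
    · have := shuffle_step hβ i hi
      by_cases e1 : i = j
      · subst e1; rw [g1 ⟨i, _⟩ (by simp)]; omega
      · by_cases e2 : i = j + 1
        · subst e2; rw [g1 ⟨j + 1 + 1, _⟩ (by simp)]; omega
        · rw [g1 _ (by simpa using e2), g1 _ (by simpa using e1)]; omega
    · have := shuffle_step hβ i hi
      have t1 := hβ.2.2.2.2 ⟨i, by omega⟩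
      have t2 := hβ.2.2.2.2 ⟨i + 1, hi⟩
      simp only at t1 t2
      by_cases e1 : i = j
      · subst e1; rw [g1' ⟨i, _⟩ (by simp)]; omega
      · by_cases e2 : i = j + 1
        · subst e2; rw [g1' ⟨j + 1 + 1, _⟩ (by simp)]; have t3 : (β ⟨j + 1 + 1, hi⟩ : ℕ) = β ⟨j + 1, by omega⟩ := h3
          have t4 := g2'
          omega
        · rw [g1' _ (by simpa using e2), g1' _ (by simpa using e1)]; omega
    · obtain ⟨k, rfl⟩ := hβ.2.2.1 v
      rcases key k with rfl | hk
      · exact ⟨⟨j + 2, hj⟩, by rw [g1 _ (by simp)]; exact Fin.ext h3⟩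
      · exact ⟨k, g1 k hk⟩
    · obtain ⟨k, rfl⟩ := hβ.2.2.2.1 v
      rcases key k with rfl | hk
      · exact ⟨⟨j, by omega⟩, by rw [g1' _ (by simp)]; apply Fin.ext; omega⟩
      · exact ⟨k, g1' k hk⟩
    · rcases key k with rfl | hk
      · simp only; omega
      · rw [g1 k hk, g1' k hk]; exact hβ.2.2.2.2 k
  refine ⟨j + 1, ⟨by omega, by omega, ?_, ?_⟩, ?_, γ, γ', hγ, g1, ?_, ⟨hγ, ⟨fun k => ?_, ?_⟩, ?_⟩,
    fun k => ?_⟩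
  · rw [ext_eq _ (j + 1 + 1) (by omega), ext_eq _ (j + 1) (by omega)]; exact h3
  · rw [ext_eq _ (j + 1) (by omega), ext_eq _ (j + 1 - 1) (by omega)]; exact h2
  · rw [ext_eq _ (j + 1) (by omega), ext_eq _ (j + 1) (by omega)]; exact h1
  · rw [ext_eq _ (j + 1) (by omega), ext_eq _ (j + 1) (by omega)]; exact g2
  · rcases key k with rfl | hk
    · rw [Fin.le_def]; omega
    · rw [g1 k hk]
  · intro h; rw [h] at g2; omega
  · rintro δ δ' - ⟨⟨d1, d2⟩, ⟨d3, d4⟩⟩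
    have off : ∀ k : Fin (m + n + 1), (k : ℕ) ≠ j + 1 → δ k = β k := fun k hk =>
      le_antisymm (d3 k) (by rw [← g1 k hk]; exact d1 k)
    have c1 := d1 ⟨j + 1, by omega⟩
    have c2 := d3 ⟨j + 1, by omega⟩
    rw [Fin.le_def] at c1 c2
    by_cases hc : (δ ⟨j + 1, by omega⟩ : ℕ) = β ⟨j + 1, by omega⟩
    · refine d4 (funext fun k => ?_)
      rcases key k with rfl | hk
      · exact Fin.ext hc
      · exact off k hk
    · refine d2 (funext fun k => ?_)
      rcases key k with rfl | hk
      · apply Fin.ext; omega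
      · rw [off k hk, g1 k hk]
  · rcases key k with rfl | hk
    · rw [Fin.le_def]; omega
    · rw [g1 k hk]; exact hle k
end
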